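/- Let R be a commutative ring, let J ⊆ R be a finitely generated ideal of linear type (i.e., α_J : Sym_R(J) → R(J) is an isomorphism) and let I = (J,y) for some y ∈ R. Then for every integer p ≥ 2 the following are equivalent: (i) α_{I,p} : Sym_p(I) → I^p is an isomorphism; (ii) α_{I,n} : Sym_n(I) → I^n is an isomorphism for each 2 ≤ n ≤ p. In particular this equivalence holds when either (1) R is reduced and I is two-generated, or (2) R is an integrally closed domain and I is three-generated. -/

import Mathlib

open scoped TensorProduct
open PiTensorProduct

section SymDefs

variable (R : Type*) [CommRing R]

/-- The `n`-fold tensor power of (the `R`-module underlying) the ideal `I`. -/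
abbrev TensPow (I : Ideal R) (n : ℕ) : Type _ := ⨂[R] (_ : Fin n), ↥I

/-- The multilinear "product" map `(v₁,…,vₙ) ↦ v₁⋯vₙ : Iⁿ ⊆ R`. -/
noncomputable def prodML (I : Ideal R) (n : ℕ) :
    MultilinearMap R (fun _ : Fin n => ↥I) R :=
  (MultilinearMap.mkPiAlgebra R (Fin n) R).compLinearMap fun _ => I.subtype

/-- The symmetrizer relations in the `n`-th tensor power of `I`. -/
noncomputable def symRel (I : Ideal R) (n : ℕ) : Submodule R (TensPow R I n) :=
  Submodule.span R {z | ∃ (v : Fin n → ↥I) (σ : Equiv.Perm (Fin n)),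
    z = tprod R v - tprod R (v ∘ σ)}

/-- The `n`-th symmetric power `Symⁿ(I)` of the ideal `I`, i.e. the `n`-th graded
component of the symmetric algebra of the `R`-module `I`. -/
abbrev SymPow (I : Ideal R) (n : ℕ) : Type _ := TensPow R I n ⧸ symRel R I n

/-- The `n`-th component `α_{I,n} : Symₙ(I) → Iⁿ ⊆ R` of the canonical morphism
`α_I : Sym(I) → R(I)` (composed with the inclusion `Iⁿ ⊆ R`; it is an isomorphism
onto `Iⁿ` iff it is injective as a map to `R`). -/
noncomputable def alphaCan (I : Ideal R) (n : ℕ) : SymPow R I n →ₗ[R] R :=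
  Submodule.liftQ (symRel R I n) (PiTensorProduct.lift (prodML R I n)) (by
    rw [symRel, Submodule.span_le]
    rintro z ⟨v, σ, rfl⟩
    simp only [SetLike.mem_coe, LinearMap.mem_ker, map_sub, PiTensorProduct.lift.tprod]
    have : prodML R I n (v ∘ σ) = prodML R I n v := by
      simp only [prodML, MultilinearMap.compLinearMap_apply,
        MultilinearMap.mkPiAlgebra_apply, Function.comp_apply]
      exact Equiv.prod_comp σ fun i => ((v i : R))
    rw [this, sub_self])

end SymDefs

namespace S18

theorem exists_perm_of_map_eq {n : ℕ} {M : Type*} (v w : Fin n → M)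
    (h : (Finset.univ.val.map v) = (Finset.univ.val.map w)) :
    ∃ σ : Equiv.Perm (Fin n), v = w ∘ σ := by
  classical
  have key : ∀ m : M, Nonempty ({i // v i = m} ≃ {i // w i = m}) := by
    intro m
    refine ⟨Fintype.equivOfCardEq ?_⟩
    have := congrArg (Multiset.count m) h
    rw [Multiset.count_map, Multiset.count_map] at this
    rw [Fintype.card_subtype, Fintype.card_subtype]
    simp only [Finset.card, Finset.filter_val]
    simpa only [eq_comm] using this
  have e := fun m => (key m).some
  exact ⟨Equiv.ofFiberEquiv e, funext fun a => (Equiv.ofFiberEquiv_map e a).symm⟩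

variable {R : Type*} [CommRing R]

/-- class of a pure tensor -/
noncomputable def sp (I : Ideal R) (n : ℕ) (v : Fin n → ↥I) : SymPow R I n :=
  (symRel R I n).mkQ (tprod R v)

theorem sp_perm (I : Ideal R) (n : ℕ) (v : Fin n → ↥I) (σ : Equiv.Perm (Fin n)) :
    sp I n (v ∘ σ) = sp I n v := by
  symm
  unfold sp
  rw [← sub_eq_zero, ← map_sub, Submodule.mkQ_apply, Submodule.Quotient.mk_eq_zero]
  exact Submodule.subset_span ⟨v, σ, rfl⟩

theorem sp_ext {I : Ideal R} {n : ℕ} {N : Type*} [AddCommGroup N] [Module R N]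
    {f g : SymPow R I n →ₗ[R] N} (h : ∀ v, f (sp I n v) = g (sp I n v)) : f = g := by
  apply Submodule.linearMap_qext
  apply PiTensorProduct.ext
  ext v
  exact h v

open Classical in
/-- value on a multiset -/
noncomputable def qm (I : Ideal R) (n : ℕ) (s : Multiset ↥I) : SymPow R I n :=
  if h : ∃ v : Fin n → ↥I, Finset.univ.val.map v = s then sp I n h.choose else 0

theorem qm_map (I : Ideal R) (n : ℕ) (v : Fin n → ↥I) :
    qm I n (Finset.univ.val.map v) = sp I n v := by
  have h : ∃ w : Fin n → ↥I, Finset.univ.val.map w = Finset.univ.val.map v := ⟨v, rfl⟩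
  unfold qm
  rw [dif_pos h]
  obtain ⟨σ, hσ⟩ := exists_perm_of_map_eq _ _ h.choose_spec
  rw [hσ, sp_perm]

theorem qm_of_card_ne (I : Ideal R) (n : ℕ) (s : Multiset ↥I) (h : s.card ≠ n) :
    qm I n s = 0 := by
  unfold qm
  rw [dif_neg]
  rintro ⟨v, rfl⟩
  simp at h

theorem exists_map_eq {M : Type*} (s : Multiset M) :
    ∃ v : Fin s.card → M, Finset.univ.val.map v = s := by
  induction s using Quotient.inductionOn with
  | h l =>
    refine ⟨fun i => l.get i, ?_⟩
    have h : (List.finRange l.length).map (fun i => l.get i) = l := by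
      rw [← List.ofFn_eq_map]; exact List.ofFn_get l
    exact congrArg (fun l : List M => (l : Multiset M)) h

theorem map_cons_fin {M : Type*} {n : ℕ} (m : M) (v : Fin n → M) :
    (Finset.univ.val.map (Fin.cons m v : Fin (n+1) → M)) = m ::ₘ Finset.univ.val.map v := by
  rw [Fin.univ_succ]
  simp [Function.comp_def]

/-- linearity in one more entry -/
theorem qm_cons_linear (I : Ideal R) (n : ℕ) (s : Multiset ↥I) :
    ∃ f : ↥I →ₗ[R] SymPow R I n, ∀ m, qm I n (m ::ₘ s) = f m := by
  by_cases h : s.card + 1 = n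
  · subst h
    obtain ⟨v, hv⟩ := exists_map_eq s
    refine ⟨(symRel R I _).mkQ ∘ₗ (PiTensorProduct.tprod R (s := fun _ : Fin (s.card + 1) => ↥I)).toLinearMap
      (Fin.cons 0 v) 0, fun m => ?_⟩
    have e : m ::ₘ s = Finset.univ.val.map (Fin.cons m v : Fin (s.card+1) → ↥I) := by
      rw [map_cons_fin, hv]
    rw [e, qm_map]
    simp [sp]
  · exact ⟨0, fun m => by rw [qm_of_card_ne _ _ _ (by simpa using h)]; rfl⟩

/-- from polynomials -/
noncomputable def psi (I : Ideal R) (n : ℕ) : MvPolynomial ↥I R →ₗ[R] SymPow R I n :=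
  (MvPolynomial.basisMonomials ↥I R).constr R fun m => qm I n (Finsupp.toMultiset m)

theorem psi_monomial (I : Ideal R) (n : ℕ) (m : ↥I →₀ ℕ) (r : R) :
    psi I n (MvPolynomial.monomial m r) = r • qm I n (Finsupp.toMultiset m) := by
  have : MvPolynomial.monomial m r = r • (MvPolynomial.basisMonomials ↥I R m) := by
    simp [MvPolynomial.smul_monomial]
  rw [this, map_smul]
  unfold psi
  rw [Module.Basis.constr_basis]

/-- linear relations -/
noncomputable def relN (I : Ideal R) : Ideal (MvPolynomial ↥I R) :=
  Ideal.span ({z | ∃ a b : ↥I, z = MvPolynomial.X (a + b) - MvPolynomial.X a - MvPolynomial.X b} ∪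
    {z | ∃ (r : R) (a : ↥I), z = MvPolynomial.X (r • a) - MvPolynomial.C r * MvPolynomial.X a})

theorem psi_monomial_mul_X (I : Ideal R) (n : ℕ) (m : ↥I →₀ ℕ) (r : R) :
    ∃ f : ↥I →ₗ[R] SymPow R I n, ∀ a,
      psi I n (MvPolynomial.monomial m r * MvPolynomial.X a) = f a := by
  obtain ⟨f, hf⟩ := qm_cons_linear I n (Finsupp.toMultiset m)
  refine ⟨r • f, fun a => ?_⟩
  rw [MvPolynomial.X, MvPolynomial.monomial_mul, psi_monomial, mul_one, LinearMap.smul_apply, ← hf,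
    map_add, Finsupp.toMultiset_single, one_smul, add_comm, Multiset.singleton_add]

theorem psi_mul_X (I : Ideal R) (n : ℕ) (G : MvPolynomial ↥I R) :
    ∃ f : ↥I →ₗ[R] SymPow R I n, ∀ a, psi I n (G * MvPolynomial.X a) = f a := by
  induction G using MvPolynomial.induction_on' with
  | monomial m r => exact psi_monomial_mul_X I n m r
  | add p q hp hq =>
    obtain ⟨f, hf⟩ := hp
    obtain ⟨g, hg⟩ := hq
    exact ⟨f + g, fun a => by rw [add_mul, map_add, hf, hg, LinearMap.add_apply]⟩

theorem psi_relN (I : Ideal R) (n : ℕ) (F : MvPolynomial ↥I R) (hF : F ∈ relN I) :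
    psi I n F = 0 := by
  unfold relN at hF
  refine Submodule.span_induction (p := fun F _ => ∀ G, psi I n (G * F) = 0) ?_ ?_ ?_ ?_ hF 1
    |> fun h => by simpa using h
  · rintro z (⟨a, b, rfl⟩ | ⟨r, a, rfl⟩) G
    · obtain ⟨f, hf⟩ := psi_mul_X I n G
      rw [mul_sub, mul_sub, map_sub, map_sub, hf, hf, hf]
      simp
    · obtain ⟨f, hf⟩ := psi_mul_X I n G
      rw [mul_sub, map_sub, mul_left_comm, ← MvPolynomial.smul_eq_C_mul, map_smul, hf, hf]
      simp
  · simp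
  · intro x y _ _ hx hy G
    rw [mul_add, map_add, hx, hy, add_zero]
  · intro a x _ hx G
    rw [smul_eq_mul, ← mul_assoc, hx]

open SymmetricAlgebra in
/-- projection -/
noncomputable def toQuot (I : Ideal R) :
    SymmetricAlgebra R ↥I →ₐ[R] (MvPolynomial ↥I R ⧸ relN I) :=
  SymmetricAlgebra.lift
    { toFun := fun a => Ideal.Quotient.mkₐ R (relN I) (MvPolynomial.X a)
      map_add' := fun a b => by
        rw [← map_add, ← sub_eq_zero, ← map_sub]
        simp only [Ideal.Quotient.mkₐ_eq_mk]
        rw [Ideal.Quotient.eq_zero_iff_mem, ← sub_sub]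
        exact Ideal.subset_span (Or.inl ⟨a, b, rfl⟩)
      map_smul' := fun r a => by
        rw [RingHom.id_apply, ← map_smul, ← sub_eq_zero, ← map_sub]
        simp only [Ideal.Quotient.mkₐ_eq_mk]
        rw [Ideal.Quotient.eq_zero_iff_mem, MvPolynomial.smul_eq_C_mul]
        exact Ideal.subset_span (Or.inr ⟨r, a, rfl⟩) }

/-- projection to a symmetric power -/
noncomputable def proj (I : Ideal R) (n : ℕ) : SymmetricAlgebra R ↥I →ₗ[R] SymPow R I n :=
  (Submodule.liftQ ((relN I).restrictScalars R) (psi I n)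
    (fun F hF => psi_relN I n F ((Submodule.restrictScalars_mem R _ _).1 hF))) ∘ₗ (toQuot I).toLinearMap

/-- product map -/
noncomputable def theta (I : Ideal R) (n : ℕ) : SymPow R I n →ₗ[R] SymmetricAlgebra R ↥I :=
  Submodule.liftQ (symRel R I n) (PiTensorProduct.lift
    ((MultilinearMap.mkPiAlgebra R (Fin n) (SymmetricAlgebra R ↥I)).compLinearMap
      fun _ => SymmetricAlgebra.ι R ↥I)) (by
    rw [symRel, Submodule.span_le]
    rintro z ⟨v, σ, rfl⟩
    simp only [SetLike.mem_coe, LinearMap.mem_ker, map_sub, PiTensorProduct.lift.tprod,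
      MultilinearMap.compLinearMap_apply, MultilinearMap.mkPiAlgebra_apply, Function.comp_apply]
    rw [Equiv.prod_comp σ fun i => SymmetricAlgebra.ι R ↥I (v i), sub_self])

theorem theta_sp (I : Ideal R) (n : ℕ) (v : Fin n → ↥I) :
    theta I n (sp I n v) = ∏ i, SymmetricAlgebra.ι R ↥I (v i) := by
  simp [theta, sp]

theorem alpha_sp (I : Ideal R) (n : ℕ) (v : Fin n → ↥I) :
    alphaCan R I n (sp I n v) = ∏ i, (v i : R) := by
  simp [alphaCan, sp, prodML]

theorem psi_prod (I : Ideal R) (n : ℕ) (v : Fin n → ↥I) :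
    psi I n (∏ i, MvPolynomial.X (v i)) = sp I n v := by
  have : (∏ i, MvPolynomial.X (v i) : MvPolynomial ↥I R) =
      MvPolynomial.monomial (∑ i, Finsupp.single (v i) 1) 1 := by
    rw [MvPolynomial.monomial_sum_one]; rfl
  rw [this, psi_monomial, one_smul, map_sum, ← qm_map]
  congr 1
  simp only [Finsupp.toMultiset_single, one_smul]
  have := Multiset.sum_map_singleton (Finset.univ.val.map v)
  rw [Multiset.map_map] at this
  exact this

theorem toQuot_prod (I : Ideal R) (n : ℕ) (v : Fin n → ↥I) :
    toQuot I (∏ i, SymmetricAlgebra.ι R ↥I (v i)) =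
      Ideal.Quotient.mkₐ R (relN I) (∏ i, MvPolynomial.X (v i)) := by
  unfold toQuot
  rw [map_prod, map_prod]
  simp only [SymmetricAlgebra.lift_ι_apply]
  rfl

theorem proj_theta (I : Ideal R) (n : ℕ) : (proj I n) ∘ₗ (theta I n) = LinearMap.id := by
  apply sp_ext
  intro v
  rw [LinearMap.comp_apply, theta_sp, LinearMap.id_apply, ← psi_prod]
  exact (congrArg (Submodule.liftQ ((relN I).restrictScalars R) (psi I n)
    (fun F hF => psi_relN I n F ((Submodule.restrictScalars_mem R _ _).1 hF)))
    (toQuot_prod I n v)).trans rfl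

/-- the degree n part -/
noncomputable abbrev BB (I : Ideal R) (n : ℕ) : Submodule R (SymmetricAlgebra R ↥I) :=
  (LinearMap.range (SymmetricAlgebra.ι R ↥I)) ^ n

/-- evaluation -/
noncomputable abbrev ev (I : Ideal R) : SymmetricAlgebra R ↥I →ₐ[R] R :=
  SymmetricAlgebra.lift I.subtype

theorem range_theta (I : Ideal R) (n : ℕ) : LinearMap.range (theta I n) = BB I n := by
  apply le_antisymm
  · rintro _ ⟨z, rfl⟩
    obtain ⟨t, rfl⟩ := Submodule.mkQ_surjective _ z
    induction t using PiTensorProduct.induction_on with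
    | smul_tprod r v =>
      rw [map_smul, map_smul]
      refine Submodule.smul_mem _ _ ?_
      rw [show (symRel R I n).mkQ (tprod R v) = sp I n v from rfl, theta_sp]
      unfold BB
      rw [Submodule.pow_eq_span_pow_set]
      apply Submodule.subset_span
      rw [Set.mem_pow]
      refine ⟨fun i => ⟨SymmetricAlgebra.ι R ↥I (v i), ⟨v i, rfl⟩⟩, ?_⟩
      rw [List.prod_ofFn]
    | add x y hx hy =>
      rw [map_add, map_add]
      exact Submodule.add_mem _ hx hy
  · unfold BB
    rw [Submodule.pow_eq_span_pow_set, Submodule.span_le]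
    intro b hb
    rw [Set.mem_pow] at hb
    obtain ⟨f, rfl⟩ := hb
    choose v hv using fun i => (f i).2
    refine ⟨sp I n v, ?_⟩
    rw [theta_sp, List.prod_ofFn]
    simp [hv]

theorem ev_theta (I : Ideal R) (n : ℕ) (z : SymPow R I n) :
    ev I (theta I n z) = alphaCan R I n z := by
  have : (ev I).toLinearMap ∘ₗ theta I n = alphaCan R I n := by
    apply sp_ext
    intro v
    rw [LinearMap.comp_apply, theta_sp, alpha_sp, AlgHom.toLinearMap_apply, map_prod]
    simp
  exact LinearMap.congr_fun this z

theorem inj_iff (I : Ideal R) (n : ℕ) :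
    Function.Injective (alphaCan R I n) ↔ ∀ b ∈ BB I n, ev I b = 0 → b = 0 := by
  rw [injective_iff_map_eq_zero]
  constructor
  · intro h b hb h0
    rw [← range_theta] at hb
    obtain ⟨z, rfl⟩ := hb
    rw [ev_theta] at h0
    rw [h z h0, map_zero]
  · intro h z hz
    have h1 := h (theta I n z) (by rw [← range_theta]; exact ⟨z, rfl⟩) (by rw [ev_theta, hz])
    have h2 := LinearMap.congr_fun (proj_theta I n) z
    rw [LinearMap.comp_apply, h1, map_zero] at h2
    exact h2.symm

end S18
namespace S18

open Polynomial in
theorem divX_lemma {S : Type*} [CommRing S] (T : Set (S × S)) (F : S[X])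
    (hF : X * F ∈ Ideal.span {z : S[X] | ∃ t ∈ T, z = C t.1 * X - C t.2}) :
    ∃ s : S, F - C s ∈ Ideal.span {z : S[X] | ∃ t ∈ T, z = C t.1 * X - C t.2} := by
  set N := Ideal.span {z : S[X] | ∃ t ∈ T, z = C t.1 * X - C t.2} with hN
  have key : ∀ G ∈ N, ∃ s : S, divX G - C s ∈ N := by
    intro G hG
    rw [hN] at hG
    refine Submodule.span_induction (p := fun G _ => ∀ H, ∃ s : S, divX (H * G) - C s ∈ N)
      ?_ ?_ ?_ ?_ hG 1 |> fun h => by simpa using h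
    · rintro z ⟨t, ht, rfl⟩ H
      refine ⟨t.1 * H.coeff 0, ?_⟩
      have e : H * (C t.1 * X - C t.2) =
          X * ((C t.1 * X - C t.2) * divX H + C (t.1 * H.coeff 0)) + C (-(t.2 * H.coeff 0)) := by
        conv_lhs => rw [← X_mul_divX_add H]
        simp only [map_mul, map_neg]
        ring
      have e2 : divX (H * (C t.1 * X - C t.2)) =
          (C t.1 * X - C t.2) * divX H + C (t.1 * H.coeff 0) := by
        rw [e]
        ext n
        simp [coeff_divX, coeff_C]
      rw [e2, add_sub_cancel_right]
      exact Ideal.mul_mem_right _ _ (Ideal.subset_span ⟨t, ht, rfl⟩)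
    · intro H
      exact ⟨0, by simp⟩
    · intro x y _ _ hx hy H
      obtain ⟨s, hs⟩ := hx H
      obtain ⟨t, ht⟩ := hy H
      refine ⟨s + t, ?_⟩
      rw [mul_add, divX_add, map_add, add_sub_add_comm]
      exact N.add_mem hs ht
    · intro a x _ hx H
      obtain ⟨s, hs⟩ := hx (H * a)
      exact ⟨s, by rwa [smul_eq_mul, ← mul_assoc]⟩
  obtain ⟨s, hs⟩ := key _ hF
  refine ⟨s, ?_⟩
  have : divX (X * F) = F := by
    ext n
    simp [coeff_divX]
  rwa [this] at hs

variable {R : Type*} [CommRing R]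

/-- grading map -/
noncomputable def gr (I : Ideal R) : SymmetricAlgebra R ↥I →ₐ[R] Polynomial (SymmetricAlgebra R ↥I) :=
  SymmetricAlgebra.lift
    (((Polynomial.monomial 1 : SymmetricAlgebra R ↥I →ₗ[SymmetricAlgebra R ↥I] _).restrictScalars R)
      ∘ₗ SymmetricAlgebra.ι R ↥I)

theorem gr_ι (I : Ideal R) (m : ↥I) :
    gr I (SymmetricAlgebra.ι R ↥I m) = Polynomial.monomial 1 (SymmetricAlgebra.ι R ↥I m) := by
  unfold gr
  rw [SymmetricAlgebra.lift_ι_apply]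
  rfl

theorem gr_BB (I : Ideal R) (n : ℕ) (b : SymmetricAlgebra R ↥I) (hb : b ∈ BB I n) :
    gr I b = Polynomial.monomial n b := by
  induction n generalizing b with
  | zero =>
    unfold BB at hb
    rw [pow_zero, Submodule.mem_one] at hb
    obtain ⟨r, rfl⟩ := hb
    rw [AlgHom.commutes]; rfl
  | succ n ih =>
    unfold BB at hb
    rw [pow_succ] at hb
    induction hb using Submodule.mul_induction_on' with
    | mem_mul_mem a ha c hc =>
      obtain ⟨m, rfl⟩ := hc
      rw [map_mul, ih a ha, gr_ι, Polynomial.monomial_mul_monomial]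
    | add x hx y hy h1 h2 => rw [map_add, map_add, h1, h2]

theorem coeff_gr_mem (I : Ideal R) (b : SymmetricAlgebra R ↥I) :
    ∀ p, (gr I b).coeff p ∈ BB I p := by
  induction b using SymmetricAlgebra.induction with
  | algebraMap r =>
    intro p
    rw [AlgHom.commutes, Polynomial.algebraMap_apply, Polynomial.coeff_C]
    split_ifs with h
    · subst h
      unfold BB
      rw [pow_zero, Submodule.mem_one]
      exact ⟨r, rfl⟩
    · exact Submodule.zero_mem _
  | ι m =>
    intro p
    rw [gr_ι, Polynomial.coeff_monomial]
    split_ifs with h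
    · subst h
      unfold BB
      rw [pow_one]
      exact ⟨m, rfl⟩
    · exact Submodule.zero_mem _
  | mul a b ha hb =>
    intro p
    rw [map_mul, Polynomial.coeff_mul]
    refine Submodule.sum_mem _ fun x hx => ?_
    rw [Finset.HasAntidiagonal.mem_antidiagonal] at hx
    unfold BB
    rw [← hx, pow_add]
    exact Submodule.mul_mem_mul (ha _) (hb _)
  | add a b ha hb =>
    intro p
    rw [map_add, Polynomial.coeff_add]
    exact Submodule.add_mem _ (ha p) (hb p)

/-- functoriality -/
noncomputable def inc {J I : Ideal R} (h : J ≤ I) : SymmetricAlgebra R ↥J →ₐ[R] SymmetricAlgebra R ↥I :=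
  SymmetricAlgebra.lift (SymmetricAlgebra.ι R ↥I ∘ₗ Submodule.inclusion h)

theorem inc_ι {J I : Ideal R} (h : J ≤ I) (m : ↥J) :
    inc h (SymmetricAlgebra.ι R ↥J m) = SymmetricAlgebra.ι R ↥I (Submodule.inclusion h m) := by
  unfold inc
  rw [SymmetricAlgebra.lift_ι_apply]
  rfl

theorem ev_inc {J I : Ideal R} (h : J ≤ I) (s : SymmetricAlgebra R ↥J) :
    ev I (inc h s) = ev J s := by
  have : (ev I).comp (inc h) = ev J := by
    apply SymmetricAlgebra.algHom_ext
    ext m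
    simp [inc_ι]
  exact DFunLike.congr_fun this s

theorem gr_inc {J I : Ideal R} (h : J ≤ I) (s : SymmetricAlgebra R ↥J) :
    gr I (inc h s) = Polynomial.mapAlgHom (inc h) (gr J s) := by
  have : (gr I).comp (inc h) = (Polynomial.mapAlgHom (inc h)).comp (gr J) := by
    apply SymmetricAlgebra.algHom_ext
    apply LinearMap.ext
    intro m
    change gr I (inc h (SymmetricAlgebra.ι R ↥J m)) =
      Polynomial.mapAlgHom (inc h) (gr J (SymmetricAlgebra.ι R ↥J m))
    rw [inc_ι, gr_ι, gr_ι, Polynomial.coe_mapAlgHom]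
    simp [inc_ι]
  exact DFunLike.congr_fun this s

section main
variable {J I : Ideal R} (h : J ≤ I) (y : ↥I) {S : Type*} [CommRing S] [Algebra R S]
  (g : ↥J →ₗ[R] S) (f : S →ₐ[R] SymmetricAlgebra R ↥I)
  (hf : ∀ m, f (g m) = SymmetricAlgebra.ι R ↥I (Submodule.inclusion h m))
  (hg : Algebra.adjoin R (Set.range g) = ⊤)
  (hI : ∀ v : ↥I, ∃ jc : ↥J × R, (v : R) = jc.1 + jc.2 * y)

/-- relations -/
def relT {J : Ideal R} (I : Ideal R) (y : ↥I) (g : ↥J →ₗ[R] S) : Set (S × S) :=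
  {t | ∃ (c : R) (a : ↥J), (a : R) = c * y ∧
    t = (algebraMap R _ c, g a)}

open Polynomial in
/-- ideal of relations -/
noncomputable def relI {J : Ideal R} (I : Ideal R) (y : ↥I) (g : ↥J →ₗ[R] S) : Ideal S[X] :=
  Ideal.span {z | ∃ t ∈ relT I y g, z = C t.1 * X - C t.2}

open Polynomial in
/-- value of a representation -/
noncomputable def val (jc : ↥J × R) : S[X] ⧸ relI I y g :=
  Ideal.Quotient.mk _ (C (g jc.1) + C (algebraMap R _ jc.2) * X)

theorem val_add (p q : ↥J × R) : val y g (p + q) = val y g p + val y g q := by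
  unfold val
  rw [← map_add]
  congr 1
  simp only [Prod.fst_add, Prod.snd_add, map_add]
  ring

theorem val_smul (r : R) (p : ↥J × R) : val y g (r • p) = r • val y g p := by
  unfold val
  rw [← Ideal.Quotient.mkₐ_eq_mk R, ← map_smul]
  congr 1
  simp only [Prod.smul_fst, Prod.smul_snd, map_smul, smul_add, smul_eq_mul, map_mul]
  rw [← Polynomial.smul_C, Algebra.smul_def r (Polynomial.C _ * _), Polynomial.algebraMap_apply]
  ring

theorem val_congr (p q : ↥J × R) (e : (p.1 : R) + p.2 * y = q.1 + q.2 * y) :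
    val y g p = val y g q := by
  unfold val
  rw [Ideal.Quotient.eq]
  apply Ideal.subset_span
  refine ⟨_, ⟨p.2 - q.2, q.1 - p.1, ?_, rfl⟩, ?_⟩
  · simp only [AddSubgroupClass.coe_sub]
    linear_combination -e
  · simp only [map_sub]
    ring

/-- the map on `I` -/
noncomputable def tauLin (hI : ∀ v : ↥I, ∃ jc : ↥J × R, (v : R) = jc.1 + jc.2 * y) :
    ↥I →ₗ[R] (Polynomial S ⧸ relI I y g) where
  toFun v := val y g (hI v).choose
  map_add' v w := by
    rw [← val_add]
    apply val_congr
    rw [← (hI (v + w)).choose_spec, Prod.fst_add, Prod.snd_add]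
    push_cast
    linear_combination (hI v).choose_spec + (hI w).choose_spec
  map_smul' r v := by
    rw [RingHom.id_apply, ← val_smul]
    apply val_congr
    rw [← (hI (r • v)).choose_spec, Prod.smul_fst, Prod.smul_snd]
    simp only [SetLike.val_smul, smul_eq_mul]
    linear_combination r * (hI v).choose_spec

theorem tauLin_apply (v : ↥I) (p : ↥J × R) (e : (v : R) = p.1 + p.2 * y) :
    tauLin y g hI v = val y g p := by
  change val y g (hI v).choose = _
  apply val_congr
  rw [← e, ← (hI v).choose_spec]

/-- the map on the symmetric algebra -/
noncomputable def tau (hI : ∀ v : ↥I, ∃ jc : ↥J × R, (v : R) = jc.1 + jc.2 * y) :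
    SymmetricAlgebra R ↥I →ₐ[R] (Polynomial S ⧸ relI I y g) :=
  SymmetricAlgebra.lift (tauLin y g hI)

theorem tau_ι (v : ↥I) : tau y g hI (SymmetricAlgebra.ι R ↥I v) = tauLin y g hI v :=
  SymmetricAlgebra.lift_ι_apply _ _

/-- evaluation at y -/
noncomputable def rho : Polynomial S →+* SymmetricAlgebra R ↥I :=
  Polynomial.eval₂RingHom f.toRingHom (SymmetricAlgebra.ι R ↥I y)

theorem rho_C (s : S) : rho y f (Polynomial.C s) = f s := by
  simp [rho]

theorem rho_X : rho y f Polynomial.X = SymmetricAlgebra.ι R ↥I y := by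
  simp [rho]

include hf hg in
theorem tau_rho (F : Polynomial S) :
    tau y g hI (rho y f F) = Ideal.Quotient.mk (relI I y g) F := by
  have h1 : ((tau y g hI).comp f : S →ₐ[R] (Polynomial S ⧸ relI I y g)) =
      (Ideal.Quotient.mkₐ R (relI I y g)).comp (Polynomial.CAlgHom) := by
    apply AlgHom.ext_of_adjoin_eq_top hg
    rintro _ ⟨m, rfl⟩
    change tau y g hI (f (g m)) =
      Ideal.Quotient.mk (relI I y g) (Polynomial.C (g m))
    rw [hf, tau_ι, tauLin_apply y g hI _ (m, 0) (by simp)]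
    simp [val]
  have h2 : ((tau y g hI).toRingHom.comp (rho y f)) =
      Ideal.Quotient.mk (relI I y g) := by
    apply Polynomial.ringHom_ext
    · intro s
      change tau y g hI (rho y f (Polynomial.C s)) = _
      rw [rho_C]
      exact DFunLike.congr_fun h1 s
    · change tau y g hI (rho y f (Polynomial.X)) = _
      rw [rho_X, tau_ι, tauLin_apply y g hI _ (0, 1) (by simp)]
      simp [val]
  exact DFunLike.congr_fun h2 F

include hf hI in
theorem rho_surj (b : SymmetricAlgebra R ↥I) : ∃ F, rho y f F = b := by
  induction b using SymmetricAlgebra.induction with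
  | algebraMap r => exact ⟨Polynomial.C (algebraMap R _ r), by rw [rho_C, AlgHom.commutes]⟩
  | ι m =>
    obtain ⟨⟨j, c⟩, e⟩ := hI m
    refine ⟨Polynomial.C (g j) +
      Polynomial.C (algebraMap R _ c) * Polynomial.X, ?_⟩
    rw [map_add, map_mul, rho_C, rho_C, rho_X, AlgHom.commutes, hf, ← Algebra.smul_def,
      ← map_smul, ← map_add]
    congr 1
    ext
    simpa using e.symm
  | mul a b ha hb =>
    obtain ⟨F, rfl⟩ := ha
    obtain ⟨G, rfl⟩ := hb
    exact ⟨F * G, map_mul _ _ _⟩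
  | add a b ha hb =>
    obtain ⟨F, rfl⟩ := ha
    obtain ⟨G, rfl⟩ := hb
    exact ⟨F + G, map_add _ _ _⟩

include hf in
theorem relI_le (F : Polynomial S) (hF : F ∈ relI I y g) :
    rho y f F = 0 := by
  have : relI I y g ≤ RingHom.ker (rho y f) := by
    unfold relI
    rw [Ideal.span_le]
    rintro z ⟨_, ⟨c, a, e, rfl⟩, rfl⟩
    rw [SetLike.mem_coe, RingHom.mem_ker]
    rw [map_sub, map_mul, rho_C, rho_C, rho_X, AlgHom.commutes, hf, ← Algebra.smul_def,
      ← map_smul, sub_eq_zero]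
    congr 1
    ext
    simpa using e.symm
  exact this hF

include hf hg hI in
theorem ker_Y_aux (b : SymmetricAlgebra R ↥I) (hb : SymmetricAlgebra.ι R ↥I y * b = 0) :
    ∃ s, b = f s := by
  obtain ⟨F, rfl⟩ := rho_surj h y g f hf hI b
  have h1 : Polynomial.X * F ∈ relI I y g := by
    rw [← Ideal.Quotient.eq_zero_iff_mem, ← tau_rho h y g f hf hg hI, map_mul, rho_X, hb, map_zero]
  obtain ⟨s, hs⟩ := divX_lemma _ _ h1
  refine ⟨s, ?_⟩
  have := relI_le h y g f hf _ hs
  rwa [map_sub, rho_C, sub_eq_zero] at this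

theorem adjoin_ι (J : Ideal R) :
    Algebra.adjoin R (Set.range (SymmetricAlgebra.ι R ↥J)) = ⊤ := by
  rw [eq_top_iff]
  rintro b -
  induction b using SymmetricAlgebra.induction with
  | algebraMap r => exact Subalgebra.algebraMap_mem _ r
  | ι m => exact Algebra.subset_adjoin ⟨m, rfl⟩
  | mul a b ha hb => exact Subalgebra.mul_mem _ ha hb
  | add a b ha hb => exact Subalgebra.add_mem _ ha hb

include hI in
theorem ker_Y (b : SymmetricAlgebra R ↥I) (hb : SymmetricAlgebra.ι R ↥I y * b = 0) :
    ∃ s, b = inc h s :=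
  ker_Y_aux h y (SymmetricAlgebra.ι R ↥J) (inc h) (inc_ι h) (adjoin_ι J) hI b hb

include h hI in
theorem step (p : ℕ) (hJ : Function.Injective (alphaCan R J p))
    (hp : Function.Injective (alphaCan R I (p + 1))) : Function.Injective (alphaCan R I p) := by
  rw [inj_iff] at *
  intro b hb h0
  have h1 : SymmetricAlgebra.ι R ↥I y * b = 0 := by
    apply hp
    · unfold BB
      rw [pow_succ']
      exact Submodule.mul_mem_mul ⟨y, rfl⟩ hb
    · rw [map_mul, h0, mul_zero]
  obtain ⟨s, rfl⟩ := ker_Y h y hI b h1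
  have h2 : inc h s = inc h ((gr J s).coeff p) := by
    have := gr_BB I p _ hb
    rw [gr_inc] at this
    have := congrArg (fun F => Polynomial.coeff F p) this
    simp only [Polynomial.coe_mapAlgHom, Polynomial.coeff_monomial, if_true] at this
    rw [← this]
    simp
  rw [h2, ev_inc] at h0
  rw [h2, hJ _ (coeff_gr_mem J s p) h0, map_zero]

end main

theorem part1 (J : Ideal R) (hJ : ∀ n : ℕ, Function.Injective (alphaCan R J n)) (y : R) (p : ℕ)
    (hp : 2 ≤ p) :
    (Function.Injective (alphaCan R (J ⊔ Ideal.span {y}) p) ↔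
          ∀ n, 2 ≤ n → n ≤ p →
            Function.Injective (alphaCan R (J ⊔ Ideal.span {y}) n)) := by
  constructor
  · intro h n _ hn
    refine Nat.decreasingInduction' (P := fun n =>
      Function.Injective (alphaCan R (J ⊔ Ideal.span {y}) n)) ?_ hn h
    intro k _ _ hk
    have hy : y ∈ J ⊔ Ideal.span {y} :=
      (le_sup_right : Ideal.span {y} ≤ J ⊔ Ideal.span {y}) (Ideal.mem_span_singleton_self y)
    refine step (J := J) (I := J ⊔ Ideal.span {y}) le_sup_left ⟨y, hy⟩ ?_ k (hJ k) hk
    rintro ⟨v, hv⟩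
    obtain ⟨j, hj, z, hz, e⟩ := Submodule.mem_sup.1 hv
    obtain ⟨c, rfl⟩ := Ideal.mem_span_singleton'.1 hz
    exact ⟨(⟨j, hj⟩, c), e.symm⟩
  · intro h
    exact h p hp le_rfl

theorem BB_range_span (I : Ideal R) (n : ℕ) (b : SymmetricAlgebra R ↥I) (x : ↥I)
    (hx : ∀ v : ↥I, ∃ c : R, v = c • x) (hb : b ∈ BB I n) :
    ∃ a : R, b = a • (SymmetricAlgebra.ι R ↥I x) ^ n := by
  induction n generalizing b with
  | zero =>
    unfold BB at hb
    rw [pow_zero, Submodule.mem_one] at hb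
    obtain ⟨r, rfl⟩ := hb
    exact ⟨r, by rw [pow_zero, Algebra.smul_def, mul_one]⟩
  | succ n ih =>
    unfold BB at hb
    rw [pow_succ] at hb
    induction hb using Submodule.mul_induction_on' with
    | mem_mul_mem a ha c hc =>
      obtain ⟨m, rfl⟩ := hc
      obtain ⟨r, rfl⟩ := ih a ha
      obtain ⟨c, rfl⟩ := hx m
      exact ⟨r * c, by rw [map_smul, smul_mul_smul_comm, pow_succ]⟩
    | add z hz w hw h1 h2 =>
      obtain ⟨r, rfl⟩ := h1
      obtain ⟨c, rfl⟩ := h2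
      exact ⟨r + c, by rw [add_smul]⟩

theorem principal [IsReduced R] (x : R) (n : ℕ) :
    Function.Injective (alphaCan R (Ideal.span {x}) n) := by
  rw [inj_iff]
  intro b hb h0
  have hxm : x ∈ Ideal.span {x} := Ideal.mem_span_singleton_self x
  obtain ⟨a, rfl⟩ := BB_range_span _ n b ⟨x, hxm⟩ (by
    rintro ⟨v, hv⟩
    obtain ⟨c, rfl⟩ := Ideal.mem_span_singleton'.1 hv
    exact ⟨c, rfl⟩) hb
  rw [map_smul, map_pow, SymmetricAlgebra.lift_ι_apply] at h0
  replace h0 : a * x ^ n = 0 := h0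
  rcases n with _ | n
  · rw [pow_zero, mul_one] at h0
    rw [h0, zero_smul]
  · have h1 : a * x = 0 := by
      apply eq_zero_of_pow_eq_zero (n := n + 1)
      rw [mul_pow, pow_succ a, mul_assoc, h0, mul_zero]
    rw [pow_succ', ← smul_mul_assoc, ← map_smul]
    have : a • (⟨x, hxm⟩ : ↥(Ideal.span {x})) = 0 := Subtype.ext h1
    rw [this, map_zero, zero_mul]

theorem BB_two (I : Ideal R) (n : ℕ) (b : SymmetricAlgebra R ↥I) (x y : ↥I)
    (hx : ∀ v : ↥I, ∃ c d : R, v = c • x + d • y) (hb : b ∈ BB I (n + 1)) :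
    ∃ a : R, ∃ b' ∈ BB I n, b = a • (SymmetricAlgebra.ι R ↥I y) ^ (n + 1) +
      SymmetricAlgebra.ι R ↥I x * b' := by
  have hY : ∀ n, (SymmetricAlgebra.ι R ↥I y) ^ n ∈ BB I n := fun n =>
    Submodule.pow_mem_pow _ (LinearMap.mem_range_self _ _) n
  induction n generalizing b with
  | zero =>
    unfold BB at hb
    rw [zero_add, pow_one] at hb
    obtain ⟨m, rfl⟩ := hb
    obtain ⟨c, d, rfl⟩ := hx m
    refine ⟨d, c • 1, Submodule.smul_mem _ _ (by unfold BB; rw [pow_zero]; exact Submodule.mem_one.2 ⟨1, map_one _⟩), ?_⟩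
    rw [map_add, map_smul, map_smul, zero_add, pow_one, mul_smul_comm, mul_one, add_comm]
  | succ n ih =>
    unfold BB at hb
    rw [pow_succ'] at hb
    induction hb using Submodule.mul_induction_on' with
    | mem_mul_mem u hu w hw =>
      obtain ⟨m, rfl⟩ := hu
      obtain ⟨c, d, rfl⟩ := hx m
      obtain ⟨a, b', hb', e⟩ := ih w hw
      refine ⟨d * a, c • w + d • (SymmetricAlgebra.ι R ↥I y * b'), ?_, ?_⟩
      · refine Submodule.add_mem _ (Submodule.smul_mem _ _ hw) (Submodule.smul_mem _ _ ?_)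
        unfold BB
        rw [pow_succ']
        exact Submodule.mul_mem_mul ⟨y, rfl⟩ hb'
      · rw [map_add, map_smul, map_smul, add_mul]
        nth_rewrite 2 [e]
        simp only [Algebra.smul_def, map_mul]
        ring
    | add z hz w hw h1 h2 =>
      obtain ⟨a, b', hb', rfl⟩ := h1
      obtain ⟨c, d', hd', rfl⟩ := h2
      exact ⟨a + c, b' + d', Submodule.add_mem _ hb' hd', by rw [add_smul]; ring⟩

theorem ev_poly {K : Type*} [Field K] [Algebra R K] (I : Ideal R) (n : ℕ)
    (b : SymmetricAlgebra R ↥I) (x y : ↥I) (a : R) (u : K)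
    (hx : ∀ v : ↥I, ∃ c d : R, v = c • x + d • y)
    (hu : algebraMap R K (a * y) = algebraMap R K x * u) (hb : b ∈ BB I n) :
    ∃ q : Polynomial R, q.natDegree ≤ n ∧
      algebraMap R K (a ^ n * ev I b) = algebraMap R K x ^ n * Polynomial.aeval u q := by
  induction n generalizing b with
  | zero =>
    unfold BB at hb
    rw [pow_zero, Submodule.mem_one] at hb
    obtain ⟨r, rfl⟩ := hb
    exact ⟨Polynomial.C r, by simp, by simp⟩
  | succ n ih =>
    unfold BB at hb
    rw [pow_succ'] at hb
    induction hb using Submodule.mul_induction_on' with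
    | mem_mul_mem w hw z hz =>
      obtain ⟨m, rfl⟩ := hw
      obtain ⟨c, d, rfl⟩ := hx m
      obtain ⟨q, hq, e⟩ := ih z hz
      refine ⟨(Polynomial.C (a * c) + Polynomial.C d * Polynomial.X) * q, ?_, ?_⟩
      · refine Polynomial.natDegree_mul_le.trans ?_
        have : (Polynomial.C (a * c) + Polynomial.C d * Polynomial.X).natDegree ≤ 1 := by
          compute_degree
        omega
      · rw [map_mul (ev I), SymmetricAlgebra.lift_ι_apply]
        simp only [map_mul, map_add, map_smul, map_pow, smul_eq_mul, Submodule.subtype_apply,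
          Polynomial.aeval_C, Polynomial.aeval_X] at e hu ⊢
        linear_combination (algebraMap R K a * algebraMap R K c * algebraMap R K x +
          algebraMap R K d * (algebraMap R K x * u)) * e +
          (algebraMap R K d * algebraMap R K a ^ n * algebraMap R K (ev I z)) * hu
    | add z hz w hw h1 h2 =>
      obtain ⟨q, hq, e⟩ := h1
      obtain ⟨q', hq', e'⟩ := h2
      refine ⟨q + q', Polynomial.natDegree_add_le_of_degree_le hq hq', ?_⟩
      rw [map_add, mul_add, map_add, e, e', map_add, mul_add]

theorem two_gen [IsDomain R] [IsIntegrallyClosed R] (x y : R) (n : ℕ) :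
    Function.Injective (alphaCan R (Ideal.span {x, y}) n) := by
  by_cases hx0 : x = 0
  · subst hx0
    have : Ideal.span {0, y} = Ideal.span {y} := by
      rw [Ideal.span_insert_zero]
    rw [this]
    exact principal y n
  set I := Ideal.span {x, y} with hI
  have hxm : x ∈ I := Ideal.subset_span (by simp)
  have hym : y ∈ I := Ideal.subset_span (by simp)
  have hgen : ∀ v : ↥I, ∃ c d : R, v = c • (⟨x, hxm⟩ : ↥I) + d • (⟨y, hym⟩ : ↥I) := by
    rintro ⟨v, hv⟩
    obtain ⟨c, d, e⟩ := Ideal.mem_span_pair.1 hv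
    exact ⟨c, d, Subtype.ext e.symm⟩
  rw [inj_iff]
  induction n with
  | zero =>
    intro b hb h0
    unfold BB at hb
    rw [pow_zero, Submodule.mem_one] at hb
    obtain ⟨r, rfl⟩ := hb
    rw [AlgHom.commutes] at h0
    replace h0 : r = 0 := h0
    rw [h0, map_zero]
  | succ n ih =>
    intro b hb h0
    obtain ⟨a, b', hb', rfl⟩ := BB_two I n b ⟨x, hxm⟩ ⟨y, hym⟩ hgen hb
    have h0' := h0
    rw [map_add, map_smul, map_mul, map_pow, SymmetricAlgebra.lift_ι_apply,
      SymmetricAlgebra.lift_ι_apply] at h0'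
    replace h0' : a * y ^ (n + 1) + x * ev I b' = 0 := h0'
    let K := FractionRing R
    have hxK : algebraMap R K x ≠ 0 := by
      simpa using hx0
    let u : K := algebraMap R K (a * y) / algebraMap R K x
    have hu : algebraMap R K (a * y) = algebraMap R K x * u := by
      exact (mul_div_cancel₀ _ hxK).symm
    obtain ⟨q, hq, e⟩ := ev_poly (K := K) I n b' ⟨x, hxm⟩ ⟨y, hym⟩ a u hgen hu hb'
    have hint : IsIntegral R u := by
      refine ⟨Polynomial.X ^ (n + 1) + q, Polynomial.monic_X_pow_add ?_, ?_⟩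
      · exact lt_of_le_of_lt Polynomial.degree_le_natDegree (by exact_mod_cast Nat.lt_succ_of_le hq)
      · rw [← Polynomial.aeval_def, map_add, map_pow, Polynomial.aeval_X]
        apply mul_left_cancel₀ (pow_ne_zero (n + 1) hxK)
        have h1 := congrArg (fun r => algebraMap R K (a ^ n * r)) h0'
        simp only [map_mul, map_add, map_pow, map_zero, mul_zero] at h1 e hu
        rw [mul_add, ← mul_pow, ← hu, mul_zero]
        linear_combination h1 - algebraMap R K x * e
    obtain ⟨d, hd⟩ := IsIntegrallyClosed.isIntegral_iff.1 hint
    have hdx : a * y = x * d := by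
      apply IsFractionRing.injective R K
      rw [hu, map_mul, hd]
    have hY : a • (⟨y, hym⟩ : ↥I) = d • (⟨x, hxm⟩ : ↥I) := by
      apply Subtype.ext
      change a * y = d * x
      rw [hdx, mul_comm]
    have hY' := congrArg (SymmetricAlgebra.ι R ↥I) hY
    rw [map_smul, map_smul] at hY'
    have hb2 : a • (SymmetricAlgebra.ι R ↥I ⟨y, hym⟩) ^ (n + 1) +
        SymmetricAlgebra.ι R ↥I ⟨x, hxm⟩ * b' =
        SymmetricAlgebra.ι R ↥I ⟨x, hxm⟩ *
          (d • (SymmetricAlgebra.ι R ↥I ⟨y, hym⟩) ^ n + b') := by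
      rw [pow_succ', ← smul_mul_assoc, hY', mul_add, smul_mul_assoc, mul_smul_comm]
    rw [hb2] at h0 ⊢
    rw [map_mul, SymmetricAlgebra.lift_ι_apply] at h0
    replace h0 := (mul_eq_zero.1 h0).resolve_left hx0
    rw [ih _ (Submodule.add_mem _ (Submodule.smul_mem _ _
      (Submodule.pow_mem_pow _ (LinearMap.mem_range_self _ _) n)) hb') h0, mul_zero]

end S18

/-- Ideals of almost-linear type.  If `J` is a finitely generated ideal of linear type
(all components of `α_J` are isomorphisms) and `I = (J,y)`, then for every `p ≥ 2`:
`α_{I,p}` is an isomorphism iff `α_{I,n}` is an isomorphism for each `2 ≤ n ≤ p`.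
In particular this equivalence holds when (1) `R` is reduced and `I` is two-generated,
or (2) `R` is an integrally closed domain and `I` is three-generated. -/
theorem statement18 {R : Type*} [CommRing R] :
    (∀ J : Ideal R, J.FG → (∀ n : ℕ, Function.Injective (alphaCan R J n)) →
      ∀ y : R, ∀ p, 2 ≤ p →
        (Function.Injective (alphaCan R (J ⊔ Ideal.span {y}) p) ↔
          ∀ n, 2 ≤ n → n ≤ p →
            Function.Injective (alphaCan R (J ⊔ Ideal.span {y}) n))) ∧
    (IsReduced R → ∀ x y : R, ∀ p, 2 ≤ p →
      (Function.Injective (alphaCan R (Ideal.span {x, y}) p) ↔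
        ∀ n, 2 ≤ n → n ≤ p →
          Function.Injective (alphaCan R (Ideal.span {x, y}) n))) ∧
    (IsDomain R → IsIntegrallyClosed R → ∀ x y z : R, ∀ p, 2 ≤ p →
      (Function.Injective (alphaCan R (Ideal.span {x, y, z}) p) ↔
        ∀ n, 2 ≤ n → n ≤ p →
          Function.Injective (alphaCan R (Ideal.span {x, y, z}) n))) := by
  refine ⟨fun J _ hJ y p hp => S18.part1 J hJ y p hp, fun _ x y p hp => ?_,
    fun _ _ x y z p hp => ?_⟩
  · have e : Ideal.span {x, y} = Ideal.span {x} ⊔ Ideal.span {y} := Ideal.span_insert x {y}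
    rw [e]
    exact S18.part1 _ (fun n => S18.principal x n) y p hp
  · have e : Ideal.span {x, y, z} = Ideal.span {x, y} ⊔ Ideal.span {z} := by
      rw [Ideal.span_insert x {y, z}, Ideal.span_insert y {z}, Ideal.span_insert x {y}, sup_assoc]
    rw [e]
    exact S18.part1 _ (fun n => S18.two_gen x y n) z p hp
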